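/- Let S be a star graph with a non-degenerate labeling l_S : V(S) → ℝ≥0. Then the ultrametric space (V(S), d_{l_S}) is locally finite if and only if the set W_ε = {v ∈ V(S) : l_S(v) ≤ ε} is finite for every ε > 0. -/

import Mathlib

open SimpleGraph

/-- For a tree `G` with labeling `l`, the "ultrametric" `d_l`: the maximum of the labels of the
vertices of the unique path joining `u` and `v` (and `0` if `u = v`). -/
noncomputable def treeDist {V : Type*} (G : SimpleGraph V) (hG : G.IsTree) (l : V → NNReal)
    (u v : V) : NNReal :=
  letI := Classical.decEq V
  if u = v then 0 else ((hG.existsUnique_path u v).choose.support.map l).foldr max 0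

/-- A labeling is non-degenerate if `max {l u, l v} > 0` for every edge `{u, v}`. -/
def Nondeg {V : Type*} (G : SimpleGraph V) (l : V → NNReal) : Prop :=
  ∀ u v : V, G.Adj u v → 0 < max (l u) (l v)

/-- A distance function is separable if there is a countable dense subset. -/
def SeparableWith {α : Type*} (d : α → α → NNReal) : Prop :=
  ∃ S : Set α, S.Countable ∧ ∀ x : α, ∀ ε : NNReal, 0 < ε → ∃ s ∈ S, d x s < ε

/-- A set is bounded if it is contained in a closed ball of positive radius. -/
def BoundedWith {α : Type*} (d : α → α → NNReal) (A : Set α) : Prop :=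
  ∃ c : α, ∃ r : NNReal, 0 < r ∧ ∀ x ∈ A, d c x ≤ r

/-- A distance function is locally finite if every bounded set is finite. -/
def LocallyFiniteWith {α : Type*} (d : α → α → NNReal) : Prop :=
  ∀ A : Set α, BoundedWith d A → A.Finite

/-- A graph is a ray if its vertices can be enumerated without repetition as
`x₁, x₂, …` with edges exactly `{xₙ, xₙ₊₁}`. -/
def IsRay {W : Type*} (R : SimpleGraph W) : Prop :=
  ∃ v : ℕ → W, Function.Bijective v ∧
    ∀ a b : W, R.Adj a b ↔ ∃ n : ℕ, (a = v n ∧ b = v (n + 1)) ∨ (a = v (n + 1) ∧ b = v n)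

/-- A tree is a star graph if some vertex `c` (the center) is adjacent to every other vertex. -/
def IsStar {W : Type*} (S : SimpleGraph W) : Prop :=
  S.IsTree ∧ ∃ c : W, ∀ v : W, v ≠ c → S.Adj c v

/-!
Since `d_l u v ≥ l v` whenever `u ≠ v`, the closed ball of radius `r` about `u` lies in
`W_r ∪ {u}`. In a star with center `c` one has `d_l c v = max (l c) (l v)` for `v ≠ c`, so
conversely `W_ε` lies in the closed ball of radius `max (l c) ε` about `c`.
-/

section TreeDist

variable {V : Type*} {G : SimpleGraph V} (hG : G.IsTree) (l : V → NNReal) {u v : V}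

theorem treeDist_eq_foldr_max_of_isPath (huv : u ≠ v) {p : G.Walk u v} (hp : p.IsPath) :
    treeDist G hG l u v = (p.support.map l).foldr max 0 := by
  have path_eq : (hG.existsUnique_path u v).choose = p :=
    (hG.existsUnique_path u v).unique (hG.existsUnique_path u v).choose_spec.1 hp
  rw [treeDist, if_neg huv, path_eq]

theorem treeDist_self (u : V) : treeDist G hG l u u = 0 := by
  rw [treeDist, if_pos rfl]

theorem treeDist_of_adj (h : G.Adj u v) : treeDist G hG l u v = max (l u) (l v) := by
  rw [treeDist_eq_foldr_max_of_isPath hG l h.ne h.isPath_toWalk]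
  simp

theorem le_treeDist_right (huv : u ≠ v) : l v ≤ treeDist G hG l u v := by
  obtain ⟨p, hp, -⟩ := hG.existsUnique_path u v
  rw [treeDist_eq_foldr_max_of_isPath hG l huv hp]
  exact List.le_max_of_le' 0 (List.mem_map_of_mem p.end_mem_support) le_rfl

theorem closedBall_treeDist_subset_insert_sublevel (u : V) (r : NNReal) :
    {v | treeDist G hG l u v ≤ r} ⊆ insert u {v | l v ≤ r} := by
  intro v hv
  rcases eq_or_ne v u with rfl | hvu
  · exact Set.mem_insert v _
  · exact Set.mem_insert_of_mem u ((le_treeDist_right hG l hvu.symm).trans hv)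

theorem locallyFiniteWith_treeDist_of_sublevel_finite
    (hfin : ∀ ε : NNReal, 0 < ε → {v | l v ≤ ε}.Finite) :
    LocallyFiniteWith (treeDist G hG l) := by
  rintro A ⟨u, r, hr, hA⟩
  have hball : A ⊆ {v | treeDist G hG l u v ≤ r} := hA
  exact ((hfin r hr).insert u).subset
    (hball.trans (closedBall_treeDist_subset_insert_sublevel hG l u r))

end TreeDist

theorem IsStar.exists_treeDist_le_max {V : Type*} {S : SimpleGraph V} (hS : IsStar S)
    (l : V → NNReal) : ∃ c, ∀ v, treeDist S hS.1 l c v ≤ max (l c) (l v) := by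
  obtain ⟨c, hc⟩ := hS.2
  refine ⟨c, fun v ↦ ?_⟩
  rcases eq_or_ne v c with rfl | hvc
  · exact (treeDist_self hS.1 l v).trans_le zero_le
  · exact (treeDist_of_adj hS.1 l (hc v hvc)).le

theorem IsStar.boundedWith_sublevel {V : Type*} {S : SimpleGraph V} (hS : IsStar S)
    (l : V → NNReal) {ε : NNReal} (hε : 0 < ε) :
    BoundedWith (treeDist S hS.1 l) {v | l v ≤ ε} := by
  obtain ⟨c, hc⟩ := hS.exists_treeDist_le_max l
  exact ⟨c, max (l c) ε, lt_max_of_lt_right hε, fun v hv ↦ (hc v).trans (max_le_max_left _ hv)⟩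

theorem star_locallyFinite_iff_sublevel_finite_general {V : Type*} {S : SimpleGraph V}
    (hS : IsStar S) (l : V → NNReal) :
    LocallyFiniteWith (treeDist S hS.1 l) ↔ ∀ ε : NNReal, 0 < ε → {v : V | l v ≤ ε}.Finite :=
  ⟨fun hfin _ hε ↦ hfin _ (hS.boundedWith_sublevel l hε),
    locallyFiniteWith_treeDist_of_sublevel_finite hS.1 l⟩

theorem star_locallyFinite_iff_sublevel_finite {V : Type*} (S : SimpleGraph V)
    (hS : IsStar S) (l : V → NNReal) (hl : Nondeg S l) :
    LocallyFiniteWith (treeDist S hS.1 l) ↔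
      ∀ ε : NNReal, 0 < ε → {v : V | l v ≤ ε}.Finite :=
  star_locallyFinite_iff_sublevel_finite_general hS l
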